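/- Let p ∈ (0,1/2], r ∈ ℕ with r ≥ 1, and δ > 0. Suppose f : {0,1}^n → {0,1} satisfies I_S(f^{≤r}) ≤ δ for every nonempty S ⊆ [n] with |S| ≤ r. Then ‖f^{≤r}‖₂² ≤ μ_p(f)² + 5^{r−1}·δ^{1/3}·σ²·I[f]. -/

import Mathlib

open Finset

namespace GlobalHC

variable {n : ℕ}

/-- Expectation with respect to the `p`-biased measure on `{0,1}^n`. -/
noncomputable def Ep (p : ℝ) (f : (Fin n → Bool) → ℝ) : ℝ :=
  ∑ x : Fin n → Bool, (∏ i, if x i then p else 1 - p) * f x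

/-- The `r`-norm with respect to the `p`-biased measure. -/
noncomputable def pnorm (p r : ℝ) (f : (Fin n → Bool) → ℝ) : ℝ :=
  (Ep p fun x => |f x| ^ r) ^ (1 / r)

/-- The `p`-biased character `χ_S`. -/
noncomputable def chi (p : ℝ) (S : Finset (Fin n)) (x : Fin n → Bool) : ℝ :=
  ∏ i ∈ S, ((if x i then (1 : ℝ) else 0) - p) / Real.sqrt (p * (1 - p))

/-- The `p`-biased Fourier coefficient `f̂(S)`. -/
noncomputable def coeff (p : ℝ) (f : (Fin n → Bool) → ℝ) (S : Finset (Fin n)) : ℝ :=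
  Ep p fun x => f x * chi p S x

/-- The derivative `D_S f = Σ_{T ⊇ S} f̂(T) χ_{T∖S}`. -/
noncomputable def derivS (p : ℝ) (S : Finset (Fin n)) (f : (Fin n → Bool) → ℝ) :
    (Fin n → Bool) → ℝ :=
  fun x => ∑ T ∈ Finset.univ.filter (fun T => S ⊆ T), coeff p f T * chi p (T \ S) x

/-- The generalised influence `I_S(f) = σ^{-2|S|} Σ_{T ⊇ S} f̂(T)²`. -/
noncomputable def genInf (p : ℝ) (S : Finset (Fin n)) (f : (Fin n → Bool) → ℝ) : ℝ :=
  (∑ T ∈ Finset.univ.filter (fun T => S ⊆ T), coeff p f T ^ 2) / (p * (1 - p)) ^ S.card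

/-- The noise operator `T_ρ f = Σ_S ρ^{|S|} f̂(S) χ_S`. -/
noncomputable def noise (p ρ : ℝ) (f : (Fin n → Bool) → ℝ) : (Fin n → Bool) → ℝ :=
  fun x => ∑ S : Finset (Fin n), ρ ^ S.card * coeff p f S * chi p S x

/-- The degree-`r` truncation `f^{≤ r}`. -/
noncomputable def trunc (p : ℝ) (r : ℕ) (f : (Fin n → Bool) → ℝ) : (Fin n → Bool) → ℝ :=
  fun x => ∑ S ∈ Finset.univ.filter (fun S : Finset (Fin n) => S.card ≤ r),
    coeff p f S * chi p S x

/-- The restriction `f_{J→1}` setting all coordinates in `J` to `1`. -/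
def restrict1 (J : Finset (Fin n)) (f : (Fin n → Bool) → ℝ) : (Fin n → Bool) → ℝ :=
  fun x => f (fun i => if i ∈ J then true else x i)

/-- `f` is `(r,δ)`-global (for the `p`-biased measure). -/
def IsGlobal (p r δ : ℝ) (f : (Fin n → Bool) → ℝ) : Prop :=
  ∀ J : Finset (Fin n), (J.card : ℝ) ≤ r → Ep p (restrict1 J f) ≤ Ep p f + δ

/-- The total influence `I[f] = Σ_i Pr_{μ_p}[f(x ⊕ e_i) ≠ f(x)]`. -/
noncomputable def totalInf (p : ℝ) (f : (Fin n → Bool) → ℝ) : ℝ :=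
  ∑ i : Fin n, Ep p fun x => if f (Function.update x i (!x i)) = f x then 0 else 1

/-- Noise stability `Stab_ρ(f) = Σ_S ρ^{|S|} f̂(S)²` (w.r.t. `μ_p`). -/
noncomputable def stab (p ρ : ℝ) (f : (Fin n → Bool) → ℝ) : ℝ :=
  ∑ S : Finset (Fin n), ρ ^ S.card * coeff p f S ^ 2

/-- `f` is monotone. -/
def Mono (f : (Fin n → Bool) → ℝ) : Prop :=
  ∀ x y : Fin n → Bool, (∀ i, x i ≤ y i) → f x ≤ f y

/-!
For each coordinate `i`, the derivative `D_i f` of a Boolean function is bounded by `σ` times the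
indicator `w_i` that flipping bit `i` changes `f`. With `g = D_i (f^{≤r})`, Plancherel and Hölder's
inequality give

  `𝔼[g²] = 𝔼[D_i f · g] ≤ σ 𝔼[w_i |g|] ≤ σ 𝔼[w_i]^{3/4} 𝔼[g⁴]^{1/4}`.

As `g` has degree less than `r` and its generalised influences are at most `σ² δ`, the
hypercontractive inequality `𝔼[(T_{1/2} h)⁴] ≤ ∑_S σ^{2|S|} I_S(h)²`, applied to `h = T_2 g`, yields
`𝔼[g⁴] ≤ 32^{r-1} σ² δ 𝔼[g²]`. Hence `𝔼[g²] ≤ 5^{r-1} δ^{1/3} σ² 𝔼[w_i]`, because `32 ≤ 5³`, and the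
Poincaré inequality for `f^{≤r}` sums these bounds over `i`.
-/

section Expectation

variable {p : ℝ}

lemma pointMass_nonneg (hp : p ∈ Set.Icc (0 : ℝ) 1) (x : Fin n → Bool) :
    0 ≤ ∏ i, if x i then p else 1 - p :=
  prod_nonneg fun i _ => by split_ifs <;> linarith [hp.1, hp.2]

lemma Ep_mono (hp : p ∈ Set.Icc (0 : ℝ) 1) {f g : (Fin n → Bool) → ℝ} (h : ∀ x, f x ≤ g x) :
    Ep p f ≤ Ep p g :=
  sum_le_sum fun x _ => mul_le_mul_of_nonneg_left (h x) (pointMass_nonneg hp x)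

lemma Ep_nonneg (hp : p ∈ Set.Icc (0 : ℝ) 1) {f : (Fin n → Bool) → ℝ} (h : ∀ x, 0 ≤ f x) :
    0 ≤ Ep p f :=
  sum_nonneg fun x _ => mul_nonneg (pointMass_nonneg hp x) (h x)

lemma Ep_add (p : ℝ) (f g : (Fin n → Bool) → ℝ) :
    Ep p (fun x => f x + g x) = Ep p f + Ep p g := by
  simp only [Ep, mul_add, sum_add_distrib]

lemma Ep_const_mul (p c : ℝ) (f : (Fin n → Bool) → ℝ) :
    Ep p (fun x => c * f x) = c * Ep p f := by
  simp only [Ep, mul_sum, mul_left_comm c]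

lemma Ep_sum {κ : Type*} (p : ℝ) (s : Finset κ) (f : κ → (Fin n → Bool) → ℝ) :
    Ep p (fun x => ∑ k ∈ s, f k x) = ∑ k ∈ s, Ep p (f k) := by
  simp only [Ep, mul_sum]
  exact sum_comm

lemma Ep_prod (p : ℝ) (F : Fin n → Bool → ℝ) :
    Ep p (fun x => ∏ i, F i (x i)) = ∏ i, (p * F i true + (1 - p) * F i false) := by
  have h := Fintype.prod_sum fun i b => (if b then p else 1 - p) * F i b
  simpa only [Ep, ← prod_mul_distrib, Fintype.sum_bool, if_true, Bool.false_eq_true, if_false]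
    using h.symm

lemma Ep_const (p c : ℝ) : Ep p (fun _ : Fin n → Bool => c) = c := by
  have h : Ep p (fun _ : Fin n → Bool => 1) = 1 := by
    simpa using Ep_prod p fun (_ : Fin n) _ => 1
  simpa [h] using Ep_const_mul p c fun _ : Fin n → Bool => 1

lemma Ep_eq_Ep_average (p : ℝ) (i : Fin n) (f : (Fin n → Bool) → ℝ) :
    Ep p f = Ep p fun x =>
      p * f (Function.update x i true) + (1 - p) * f (Function.update x i false) := by
  set mass : Bool → ℝ := fun b => if b then p else 1 - p with hmass
  set e := (Equiv.funSplitAt i Bool).symm with he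
  have update_e (b c : Bool) (y : {j // j ≠ i} → Bool) :
      Function.update (e (b, y)) i c = e (c, y) := by
    ext j
    by_cases h : j = i <;> simp [he, Equiv.funSplitAt_symm_apply, h]
  have mass_e (b : Bool) (y : {j // j ≠ i} → Bool) :
      ∏ j, mass (e (b, y) j) = mass b * ∏ j, mass (y j) := by
    rw [Fintype.prod_eq_mul_prod_subtype_ne _ i]
    congr 1
    · simp [he, Equiv.funSplitAt_symm_apply]
    · exact prod_congr rfl fun j _ => by simp [he, Equiv.funSplitAt_symm_apply, j.2]
  have Ep_eq (g : (Fin n → Bool) → ℝ) : Ep p g = ∑ y : {j // j ≠ i} → Bool,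
      (∏ j, mass (y j)) * (p * g (e (true, y)) + (1 - p) * g (e (false, y))) := by
    rw [Ep, ← e.sum_comp, Fintype.sum_prod_type_right]
    refine sum_congr rfl fun y _ => ?_
    rw [Fintype.sum_bool, mass_e true, mass_e false]
    simp only [hmass, if_true, Bool.false_eq_true, if_false]
    ring
  rw [Ep_eq, Ep_eq]
  refine sum_congr rfl fun y _ => ?_
  simp only [update_e]
  ring

/-- Hölder's inequality with exponents `(k + 1) / k` and `k + 1` for the measure of density `w`. -/
lemma Ep_mul_pow_le (hp : p ∈ Set.Icc (0 : ℝ) 1) {w g : (Fin n → Bool) → ℝ}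
    (hw : ∀ x, 0 ≤ w x) (hg : ∀ x, 0 ≤ g x) (k : ℕ) :
    Ep p (fun x => w x * g x) ^ (k + 1) ≤ Ep p w ^ k * Ep p (fun x => w x * g x ^ (k + 1)) := by
  have hwg (j : ℕ) : 0 ≤ Ep p (fun x => w x * g x ^ j) :=
    Ep_nonneg hp fun x => mul_nonneg (hw x) (pow_nonneg (hg x) j)
  have holder : Ep p (fun x => w x * g x) ≤
      Ep p w ^ (1 - ((k + 1 : ℕ) : ℝ)⁻¹) *
        Ep p (fun x => w x * g x ^ (k + 1)) ^ ((k + 1 : ℕ) : ℝ)⁻¹ := by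
    simpa only [Ep, mul_assoc, Real.rpow_natCast] using
      Real.inner_le_weight_mul_Lp_of_nonneg univ (p := (k + 1 : ℕ)) (by simp)
        (fun x => (∏ i, if x i then p else 1 - p) * w x) g
        (fun x => mul_nonneg (pointMass_nonneg hp x) (hw x)) hg
  calc Ep p (fun x => w x * g x) ^ (k + 1)
      ≤ (Ep p w ^ (1 - ((k + 1 : ℕ) : ℝ)⁻¹) *
          Ep p (fun x => w x * g x ^ (k + 1)) ^ ((k + 1 : ℕ) : ℝ)⁻¹) ^ (k + 1) :=
        pow_le_pow_left₀ (by simpa using hwg 1) holder _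
    _ = Ep p w ^ k * Ep p (fun x => w x * g x ^ (k + 1)) := by
        rw [mul_pow, Real.rpow_inv_natCast_pow (hwg _) k.succ_ne_zero, ← Real.rpow_mul_natCast
          (Ep_nonneg hp hw), sub_mul, inv_mul_cancel₀ (by positivity), one_mul,
          Nat.cast_succ, add_sub_cancel_right, Real.rpow_natCast]

lemma pnorm_two_sq (hp : p ∈ Set.Icc (0 : ℝ) 1) (f : (Fin n → Bool) → ℝ) :
    pnorm p 2 f ^ 2 = Ep p fun x => f x ^ 2 := by
  simp only [pnorm, Real.rpow_two, sq_abs]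
  rw [← Real.sqrt_eq_rpow, Real.sq_sqrt (Ep_nonneg hp fun x => sq_nonneg (f x))]

end Expectation

section Characters

/-- The normalised `p`-biased bit `(b - p) / σ`, so that `χ_S(x) = ∏_{i ∈ S} biasedBit p (x i)`. -/
noncomputable def biasedBit (p : ℝ) (b : Bool) : ℝ :=
  ((if b then (1 : ℝ) else 0) - p) / Real.sqrt (p * (1 - p))

variable {p : ℝ}

lemma variance_pos (hp : p ∈ Set.Ioo (0 : ℝ) 1) : 0 < p * (1 - p) :=
  mul_pos hp.1 (sub_pos.2 hp.2)

lemma biasedBit_mean (p : ℝ) : p * biasedBit p true + (1 - p) * biasedBit p false = 0 := by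
  simp only [biasedBit, if_true, Bool.false_eq_true, if_false]
  ring

lemma biasedBit_true_mul_false (hp : p ∈ Set.Ioo (0 : ℝ) 1) :
    biasedBit p true * biasedBit p false = -1 := by
  have hσ := variance_pos hp
  simp only [biasedBit, if_true, Bool.false_eq_true, if_false]
  rw [div_mul_div_comm, Real.mul_self_sqrt hσ.le, div_eq_iff hσ.ne']
  ring

lemma biasedBit_true_sub_false (p : ℝ) :
    biasedBit p true - biasedBit p false = (Real.sqrt (p * (1 - p)))⁻¹ := by
  simp only [biasedBit, if_true, Bool.false_eq_true, if_false]
  ring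

lemma biasedBit_second_moment (hp : p ∈ Set.Ioo (0 : ℝ) 1) :
    p * biasedBit p true ^ 2 + (1 - p) * biasedBit p false ^ 2 = 1 := by
  linear_combination (biasedBit p true + biasedBit p false) * biasedBit_mean p -
    biasedBit_true_mul_false hp

lemma one_add_biasedBit_mul (hp : p ∈ Set.Ioo (0 : ℝ) 1) (b c : Bool) :
    1 + biasedBit p b * biasedBit p c = if b = c then (if b then p else 1 - p)⁻¹ else 0 := by
  have h := biasedBit_true_mul_false hp
  have hm := biasedBit_mean p
  cases b <;> cases c <;> simp only [if_true, if_false, Bool.false_eq_true, reduceCtorEq]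
  · refine eq_inv_of_mul_eq_one_left ?_
    linear_combination biasedBit p false * hm - p * h
  · linear_combination h
  · linear_combination h
  · refine eq_inv_of_mul_eq_one_left ?_
    linear_combination biasedBit p true * hm - (1 - p) * h

lemma chi_eq_prod_univ (p : ℝ) (S : Finset (Fin n)) (x : Fin n → Bool) :
    chi p S x = ∏ i, if i ∈ S then biasedBit p (x i) else 1 := by
  rw [prod_ite_mem, univ_inter]
  rfl

lemma chi_empty (p : ℝ) (x : Fin n → Bool) : chi p ∅ x = 1 :=
  prod_empty

lemma chi_insert (p : ℝ) {i : Fin n} {S : Finset (Fin n)} (hi : i ∉ S) (x : Fin n → Bool) :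
    chi p (insert i S) x = biasedBit p (x i) * chi p S x :=
  prod_insert hi

lemma chi_update (p : ℝ) {i : Fin n} {S : Finset (Fin n)} (hi : i ∉ S) (x : Fin n → Bool)
    (b : Bool) : chi p S (Function.update x i b) = chi p S x :=
  prod_congr rfl fun j hj => by rw [Function.update_of_ne (ne_of_mem_of_not_mem hj hi)]

lemma Ep_chi_mul_chi (hp : p ∈ Set.Ioo (0 : ℝ) 1) (S T : Finset (Fin n)) :
    Ep p (fun x => chi p S x * chi p T x) = if S = T then 1 else 0 := by
  have coordinate (i : Fin n) :
      p * ((if i ∈ S then biasedBit p true else 1) * (if i ∈ T then biasedBit p true else 1)) +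
        (1 - p) * ((if i ∈ S then biasedBit p false else 1) *
          (if i ∈ T then biasedBit p false else 1)) = if i ∈ S ↔ i ∈ T then 1 else 0 := by
    have mean := biasedBit_mean p
    have second_moment := biasedBit_second_moment hp
    by_cases hS : i ∈ S <;> by_cases hT : i ∈ T
    · simpa [hS, hT, ← sq] using second_moment
    · simpa [hS, hT] using mean
    · simpa [hS, hT] using mean
    · simp [hS, hT]
  simp only [chi_eq_prod_univ, ← prod_mul_distrib]
  rw [Ep_prod p fun i b =>
    (if i ∈ S then biasedBit p b else 1) * (if i ∈ T then biasedBit p b else 1)]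
  simp only [coordinate, prod_ite_zero, prod_const_one, mem_univ, true_imp_iff, Finset.ext_iff]

lemma sum_chi_mul_chi (hp : p ∈ Set.Ioo (0 : ℝ) 1) (x y : Fin n → Bool) :
    ∑ S, chi p S x * chi p S y = if x = y then (∏ i, if x i then p else 1 - p)⁻¹ else 0 := by
  calc ∑ S, chi p S x * chi p S y
      = ∏ i, (1 + biasedBit p (x i) * biasedBit p (y i)) := by
        rw [prod_one_add, powerset_univ]
        exact sum_congr rfl fun S _ => prod_mul_distrib.symm
    _ = if x = y then (∏ i, if x i then p else 1 - p)⁻¹ else 0 := by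
        simp only [one_add_biasedBit_mul hp, prod_ite_zero, prod_inv_distrib, mem_univ,
          true_imp_iff, funext_iff]

end Characters

section Fourier

variable {p : ℝ}

theorem fourier_inversion (hp : p ∈ Set.Ioo (0 : ℝ) 1) (f : (Fin n → Bool) → ℝ)
    (x : Fin n → Bool) : ∑ S, coeff p f S * chi p S x = f x := by
  have mass_ne_zero : (∏ i, if x i then p else 1 - p) ≠ 0 :=
    prod_ne_zero_iff.2 fun i _ => by split_ifs <;> linarith [hp.1, hp.2]
  calc ∑ S, coeff p f S * chi p S x
      = ∑ y, (∏ i, if y i then p else 1 - p) * f y * ∑ S, chi p S y * chi p S x := by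
        simp only [coeff, Ep, sum_mul, mul_sum]
        rw [sum_comm]
        simp only [mul_assoc]
    _ = f x := by
        simp only [sum_chi_mul_chi hp, mul_ite, mul_zero, sum_ite_eq', mem_univ, if_true]
        field_simp

theorem Ep_mul_eq_sum_coeff (hp : p ∈ Set.Ioo (0 : ℝ) 1) (f g : (Fin n → Bool) → ℝ) :
    Ep p (fun x => f x * g x) = ∑ S, coeff p f S * coeff p g S := by
  calc Ep p (fun x => f x * g x)
      = Ep p fun x => ∑ S, coeff p g S * (f x * chi p S x) := by
        simp only [mul_left_comm _ (f _), ← mul_sum, fourier_inversion hp]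
    _ = ∑ S, coeff p f S * coeff p g S := by
        rw [Ep_sum]
        exact sum_congr rfl fun S _ => by rw [Ep_const_mul, mul_comm]; rfl

lemma Ep_sq_eq_sum_coeff_sq (hp : p ∈ Set.Ioo (0 : ℝ) 1) (f : (Fin n → Bool) → ℝ) :
    Ep p (fun x => f x ^ 2) = ∑ S, coeff p f S ^ 2 := by
  simpa only [sq] using Ep_mul_eq_sum_coeff hp f f

lemma coeff_empty (p : ℝ) (f : (Fin n → Bool) → ℝ) : coeff p f ∅ = Ep p f := by
  simp only [coeff, chi_empty, mul_one]

lemma coeff_sum_mul_chi (hp : p ∈ Set.Ioo (0 : ℝ) 1) {κ : Type*} (s : Finset κ) (a : κ → ℝ)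
    (φ : κ → Finset (Fin n)) (T : Finset (Fin n)) :
    coeff p (fun x => ∑ k ∈ s, a k * chi p (φ k) x) T = ∑ k ∈ s, if φ k = T then a k else 0 := by
  simp only [coeff, sum_mul, mul_assoc, Ep_sum, Ep_const_mul, Ep_chi_mul_chi hp, mul_ite, mul_one,
    mul_zero]

lemma coeff_trunc (hp : p ∈ Set.Ioo (0 : ℝ) 1) (r : ℕ) (f : (Fin n → Bool) → ℝ)
    (S : Finset (Fin n)) : coeff p (trunc p r f) S = if S.card ≤ r then coeff p f S else 0 :=
  (coeff_sum_mul_chi hp {S : Finset (Fin n) | S.card ≤ r} (coeff p f) id S).trans (by simp)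

lemma coeff_noise (hp : p ∈ Set.Ioo (0 : ℝ) 1) (ρ : ℝ) (f : (Fin n → Bool) → ℝ)
    (S : Finset (Fin n)) : coeff p (noise p ρ f) S = ρ ^ S.card * coeff p f S :=
  (coeff_sum_mul_chi hp univ (fun S => ρ ^ S.card * coeff p f S) id S).trans (by simp)

lemma coeff_derivS (hp : p ∈ Set.Ioo (0 : ℝ) 1) (S : Finset (Fin n)) (f : (Fin n → Bool) → ℝ)
    (T : Finset (Fin n)) :
    coeff p (derivS p S f) T = if Disjoint S T then coeff p f (S ∪ T) else 0 := by
  have sdiff_eq_iff {U : Finset (Fin n)} (hSU : S ⊆ U) : U \ S = T ↔ Disjoint S T ∧ S ∪ T = U := by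
    constructor
    · rintro rfl
      exact ⟨disjoint_sdiff, union_sdiff_of_subset hSU⟩
    · rintro ⟨hST, rfl⟩
      exact union_sdiff_cancel_left hST
  calc coeff p (derivS p S f) T
      = ∑ U with S ⊆ U, if U \ S = T then coeff p f U else 0 :=
        coeff_sum_mul_chi hp {U | S ⊆ U} (coeff p f) (· \ S) T
    _ = ∑ U with S ⊆ U, if Disjoint S T ∧ S ∪ T = U then coeff p f U else 0 :=
        sum_congr rfl fun U hU => by simp only [sdiff_eq_iff (mem_filter.1 hU).2]
    _ = if Disjoint S T then coeff p f (S ∪ T) else 0 := by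
        by_cases hST : Disjoint S T <;> simp [hST]

lemma noise_noise (hp : p ∈ Set.Ioo (0 : ℝ) 1) (ρ τ : ℝ) (f : (Fin n → Bool) → ℝ) :
    noise p ρ (noise p τ f) = noise p (ρ * τ) f := by
  funext x
  simp only [noise.eq_def p ρ, coeff_noise hp, noise.eq_def p (ρ * τ), mul_pow, mul_assoc]

lemma noise_one (hp : p ∈ Set.Ioo (0 : ℝ) 1) (f : (Fin n → Bool) → ℝ) : noise p 1 f = f := by
  funext x
  simp only [noise, one_pow, one_mul, fourier_inversion hp]

end Fourier

section Influences

variable {p : ℝ}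

lemma sum_coeff_derivS_sq (hp : p ∈ Set.Ioo (0 : ℝ) 1) {S T : Finset (Fin n)}
    (hST : Disjoint S T) (f : (Fin n → Bool) → ℝ) :
    ∑ U with T ⊆ U, coeff p (derivS p S f) U ^ 2 = ∑ U with S ∪ T ⊆ U, coeff p f U ^ 2 := by
  calc ∑ U with T ⊆ U, coeff p (derivS p S f) U ^ 2
      = ∑ U with T ⊆ U ∧ Disjoint S U, coeff p f (S ∪ U) ^ 2 := by
        simp only [coeff_derivS hp, ite_pow, zero_pow two_ne_zero, ← sum_filter, filter_filter]
    _ = ∑ U with S ∪ T ⊆ U, coeff p f U ^ 2 := by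
        refine sum_nbij' (S ∪ ·) (· \ S) ?_ ?_ ?_ ?_ fun _ _ => rfl <;>
          simp only [mem_filter, mem_univ, true_and]
        · exact fun U hU => union_subset_union_right hU.1
        · exact fun U hU => ⟨subset_sdiff.2 ⟨union_subset_right hU, hST.symm⟩, disjoint_sdiff⟩
        · exact fun U hU => union_sdiff_cancel_left hU.2
        · exact fun U hU => union_sdiff_of_subset (union_subset_left hU)

lemma Ep_derivS_sq (hp : p ∈ Set.Ioo (0 : ℝ) 1) (S : Finset (Fin n)) (f : (Fin n → Bool) → ℝ) :
    Ep p (fun x => derivS p S f x ^ 2) = ∑ T with S ⊆ T, coeff p f T ^ 2 := by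
  simpa [Ep_sq_eq_sum_coeff_sq hp] using sum_coeff_derivS_sq hp (disjoint_empty_right S) f

theorem Ep_sq_le_sq_Ep_add_sum_Ep_derivS_sq (hp : p ∈ Set.Ioo (0 : ℝ) 1)
    (f : (Fin n → Bool) → ℝ) :
    Ep p (fun x => f x ^ 2) ≤ Ep p f ^ 2 + ∑ i, Ep p (fun x => derivS p {i} f x ^ 2) := by
  have sum_deriv : ∑ i, Ep p (fun x => derivS p {i} f x ^ 2) = ∑ S, S.card * coeff p f S ^ 2 := by
    simp only [Ep_derivS_sq hp, singleton_subset_iff]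
    rw [sum_comm' (s' := fun S => S) (t' := univ) (by simp)]
    simp only [sum_const, nsmul_eq_mul]
  rw [sum_deriv, Ep_sq_eq_sum_coeff_sq hp, ← coeff_empty, ← add_sum_erase _ _ (mem_univ ∅),
    ← add_sum_erase _ (fun S => S.card * coeff p f S ^ 2) (mem_univ ∅), card_empty, Nat.cast_zero,
    zero_mul, zero_add]
  gcongr with S hS
  refine le_mul_of_one_le_left (sq_nonneg _) ?_
  exact_mod_cast (nonempty_iff_ne_empty.2 (ne_of_mem_erase hS)).card_pos

lemma chi_update_true_sub_false (p : ℝ) (i : Fin n) (T : Finset (Fin n)) (x : Fin n → Bool) :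
    chi p T (Function.update x i true) - chi p T (Function.update x i false) =
      if i ∈ T then (Real.sqrt (p * (1 - p)))⁻¹ * chi p (T \ {i}) x else 0 := by
  split_ifs with hi
  · have hT := notMem_erase i T
    rw [sdiff_singleton_eq_erase, ← biasedBit_true_sub_false]
    conv_lhs => rw [← insert_erase hi]
    simp only [chi_insert p hT, chi_update p hT, Function.update_self, sub_mul]
  · simp only [chi_update p hi, sub_self]

lemma derivS_singleton (hp : p ∈ Set.Ioo (0 : ℝ) 1) (i : Fin n) (f : (Fin n → Bool) → ℝ)
    (x : Fin n → Bool) :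
    derivS p {i} f x = Real.sqrt (p * (1 - p)) *
      (f (Function.update x i true) - f (Function.update x i false)) := by
  have hσ : Real.sqrt (p * (1 - p)) ≠ 0 := (Real.sqrt_pos.2 (variance_pos hp)).ne'
  rw [← fourier_inversion hp f (Function.update x i true),
    ← fourier_inversion hp f (Function.update x i false), ← sum_sub_distrib]
  simp only [derivS, singleton_subset_iff, ← mul_sub, chi_update_true_sub_false, mul_ite, mul_zero,
    mul_sum, ← sum_filter]
  exact sum_congr rfl fun T _ => by field_simp

lemma genInf_nonneg (hp : p ∈ Set.Icc (0 : ℝ) 1) (S : Finset (Fin n)) (f : (Fin n → Bool) → ℝ) :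
    0 ≤ genInf p S f :=
  div_nonneg (sum_nonneg fun _ _ => sq_nonneg _)
    (pow_nonneg (mul_nonneg hp.1 (sub_nonneg.2 hp.2)) _)

lemma genInf_eq_zero {S : Finset (Fin n)} {f : (Fin n → Bool) → ℝ}
    (h : ∀ T, S ⊆ T → coeff p f T = 0) : genInf p S f = 0 := by
  rw [genInf, sum_eq_zero fun T hT => by rw [h T (mem_filter.1 hT).2, zero_pow two_ne_zero],
    zero_div]

lemma genInf_derivS (hp : p ∈ Set.Ioo (0 : ℝ) 1) {S T : Finset (Fin n)} (hST : Disjoint S T)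
    (f : (Fin n → Bool) → ℝ) :
    genInf p T (derivS p S f) = (p * (1 - p)) ^ S.card * genInf p (S ∪ T) f := by
  have hσ := (variance_pos hp).ne'
  rw [genInf, genInf, sum_coeff_derivS_sq hp hST, card_union_of_disjoint hST, pow_add]
  field_simp

lemma genInf_noise_le (hp : p ∈ Set.Ioo (0 : ℝ) 1) {ρ : ℝ} (hρ : 1 ≤ ρ) {d : ℕ}
    {f : (Fin n → Bool) → ℝ} (hdeg : ∀ T, d < T.card → coeff p f T = 0) (S : Finset (Fin n)) :
    genInf p S (noise p ρ f) ≤ ρ ^ (2 * d) * genInf p S f := by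
  have hσ := variance_pos hp
  rw [genInf, genInf, ← mul_div_assoc, mul_sum]
  gcongr with T
  rw [coeff_noise hp, mul_pow, ← pow_mul, mul_comm T.card]
  rcases le_or_gt T.card d with hT | hT
  · gcongr
  · simp [hdeg T hT]

lemma sum_genInf (hp : p ∈ Set.Ioo (0 : ℝ) 1) (f : (Fin n → Bool) → ℝ) :
    ∑ S, (p * (1 - p)) ^ S.card * genInf p S f = ∑ T, 2 ^ T.card * coeff p f T ^ 2 := by
  have hσ := (variance_pos hp).ne'
  simp only [genInf, mul_div_cancel₀ _ (pow_ne_zero _ hσ)]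
  rw [sum_comm' (s' := powerset) (t' := univ) (by simp)]
  simp only [sum_const, card_powerset, nsmul_eq_mul, Nat.cast_pow, Nat.cast_ofNat]

end Influences

section Hypercontractivity

variable {p : ℝ}

/-- The noisy polynomial `T_{1/2} (∑_{S ⊆ U} a_S χ_S)`; restricting it to the coordinates in `U`
allows induction on `U`. -/
noncomputable def halfNoisePoly (p : ℝ) (U : Finset (Fin n)) (a : Finset (Fin n) → ℝ)
    (x : Fin n → Bool) : ℝ :=
  ∑ S ∈ U.powerset, (1 / 2) ^ S.card * a S * chi p S x

/-- The Fourier weight above `S` of `∑_{T ⊆ U} a_T χ_T`, which is `σ^{2|S|}` times the generalised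
influence of `S`. -/
def upperWeight (U : Finset (Fin n)) (a : Finset (Fin n) → ℝ) (S : Finset (Fin n)) : ℝ :=
  ∑ T ∈ U.powerset with S ⊆ T, a T ^ 2

lemma halfNoisePoly_insert (p : ℝ) {U : Finset (Fin n)} {i : Fin n} (hi : i ∉ U)
    (a : Finset (Fin n) → ℝ) (x : Fin n → Bool) :
    halfNoisePoly p (insert i U) a x = halfNoisePoly p U a x +
      biasedBit p (x i) / 2 * halfNoisePoly p U (fun S => a (insert i S)) x := by
  rw [halfNoisePoly, halfNoisePoly, halfNoisePoly, sum_powerset_insert hi, mul_sum]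
  congr 1
  refine sum_congr rfl fun S hS => ?_
  have hiS := notMem_mono (mem_powerset.1 hS) hi
  rw [chi_insert p hiS, card_insert_of_notMem hiS]
  ring

lemma halfNoisePoly_update (p : ℝ) {U : Finset (Fin n)} {i : Fin n} (hi : i ∉ U)
    (a : Finset (Fin n) → ℝ) (x : Fin n → Bool) (b : Bool) :
    halfNoisePoly p U a (Function.update x i b) = halfNoisePoly p U a x :=
  sum_congr rfl fun S hS => by rw [chi_update p (notMem_mono (mem_powerset.1 hS) hi)]

lemma upperWeight_insert_of_subset {U S : Finset (Fin n)} {i : Fin n} (hi : i ∉ U) (hS : S ⊆ U)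
    (a : Finset (Fin n) → ℝ) :
    upperWeight (insert i U) a S =
      upperWeight U a S + upperWeight U (fun T => a (insert i T)) S := by
  simp only [upperWeight, sum_filter, sum_powerset_insert hi,
    subset_insert_iff_of_notMem (notMem_mono hS hi)]

lemma upperWeight_insert_insert {U S : Finset (Fin n)} {i : Fin n} (hi : i ∉ U) (hS : S ⊆ U)
    (a : Finset (Fin n) → ℝ) :
    upperWeight (insert i U) a (insert i S) = upperWeight U (fun T => a (insert i T)) S := by
  have below_eq_zero : ∑ T ∈ U.powerset, (if insert i S ⊆ T then a T ^ 2 else 0) = 0 :=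
    sum_eq_zero fun T hT =>
      if_neg fun h => notMem_mono (mem_powerset.1 hT) hi (h (mem_insert_self i S))
  simp only [upperWeight, sum_filter, sum_powerset_insert hi, below_eq_zero, zero_add,
    insert_subset_insert_iff (notMem_mono hS hi)]

lemma two_point_inequality (hp : p ∈ Set.Ioo (0 : ℝ) 1) (A B C D : ℝ) :
    p * ((A + biasedBit p true / 2 * B) ^ 2 * (C + biasedBit p true / 2 * D) ^ 2) +
      (1 - p) * ((A + biasedBit p false / 2 * B) ^ 2 * (C + biasedBit p false / 2 * D) ^ 2) ≤
    (A ^ 2 + B ^ 2) * (C ^ 2 + D ^ 2) + (p * (1 - p))⁻¹ * (B ^ 2 * D ^ 2) := by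
  have mean := biasedBit_mean p
  have second_moment := biasedBit_second_moment hp
  have bit_mul := biasedBit_true_mul_false hp
  have inv_variance : (p * (1 - p))⁻¹ = (biasedBit p true - biasedBit p false) ^ 2 := by
    rw [biasedBit_true_sub_false, inv_pow, Real.sq_sqrt (variance_pos hp).le]
  rw [inv_variance]
  generalize biasedBit p true = u at *
  generalize biasedBit p false = v at *
  set m := u + v
  -- As `u * v = -1`, both values of the bit satisfy `t ^ 2 = 1 + m * t`.
  have third_moment : p * u ^ 3 + (1 - p) * v ^ 3 = m := by
    linear_combination m * second_moment - u * v * mean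
  have fourth_moment : p * u ^ 4 + (1 - p) * v ^ 4 = 1 + m ^ 2 := by
    linear_combination m * third_moment - u * v * second_moment - bit_mul
  have inv_variance_eq : (u - v) ^ 2 = m ^ 2 + 4 := by
    linear_combination -4 * bit_mul
  have expansion :
      p * ((A + u / 2 * B) ^ 2 * (C + u / 2 * D) ^ 2) +
        (1 - p) * ((A + v / 2 * B) ^ 2 * (C + v / 2 * D) ^ 2) =
      A ^ 2 * C ^ 2 + (A ^ 2 * D ^ 2 + B ^ 2 * C ^ 2 + 4 * A * B * C * D) / 4 +
        m * (A * B * D ^ 2 + B ^ 2 * C * D) / 4 + (1 + m ^ 2) * (B ^ 2 * D ^ 2) / 16 := by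
    linear_combination (A ^ 2 * C * D + A * B * C ^ 2) * mean +
      (A ^ 2 * D ^ 2 + B ^ 2 * C ^ 2 + 4 * A * B * C * D) / 4 * second_moment +
      (A * B * D ^ 2 + B ^ 2 * C * D) / 4 * third_moment + B ^ 2 * D ^ 2 / 16 * fourth_moment
  rw [expansion, inv_variance_eq]
  nlinarith [sq_nonneg (A * D - B * C), sq_nonneg (A * D - m / 2 * (B * D)),
    sq_nonneg (B * C - m / 2 * (B * D)), sq_nonneg (B * D), sq_nonneg (m * (B * D))]

/-- Polarising the fourth moment into a bilinear statement is what makes the induction close: the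
cross terms of the two-point inequality pair the two halves of `a` with those of `b`. -/
lemma Ep_halfNoisePoly_sq_mul_sq_le (hp : p ∈ Set.Ioo (0 : ℝ) 1) (U : Finset (Fin n))
    (a b : Finset (Fin n) → ℝ) :
    Ep p (fun x => halfNoisePoly p U a x ^ 2 * halfNoisePoly p U b x ^ 2) ≤
      ∑ S ∈ U.powerset, (p * (1 - p))⁻¹ ^ S.card * (upperWeight U a S * upperWeight U b S) := by
  have hσ := variance_pos hp
  induction U using Finset.induction_on generalizing a b with
  | empty => simp [halfNoisePoly, upperWeight, chi_empty, Ep_const, filter_singleton]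
  | insert i U hi ih =>
    set a' : Finset (Fin n) → ℝ := fun S => a (insert i S) with ha'
    set b' : Finset (Fin n) → ℝ := fun S => b (insert i S) with hb'
    set c := (p * (1 - p))⁻¹
    set M : (Finset (Fin n) → ℝ) → (Finset (Fin n) → ℝ) → ℝ := fun f g =>
      Ep p fun x => halfNoisePoly p U f x ^ 2 * halfNoisePoly p U g x ^ 2 with hM
    calc Ep p (fun x => halfNoisePoly p (insert i U) a x ^ 2 *
            halfNoisePoly p (insert i U) b x ^ 2)
        ≤ M a b + M a b' + M a' b + (1 + c) * M a' b' := by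
          simp only [hM]
          rw [Ep_eq_Ep_average p i, ← Ep_const_mul, ← Ep_add, ← Ep_add, ← Ep_add]
          refine Ep_mono (Set.Ioo_subset_Icc_self hp) fun x => ?_
          simp only [halfNoisePoly_insert p hi, halfNoisePoly_update p hi, Function.update_self]
          exact (two_point_inequality hp _ _ _ _).trans_eq (by ring)
      _ ≤ ∑ S ∈ U.powerset, c ^ S.card * (upperWeight U a S * upperWeight U b S) +
            ∑ S ∈ U.powerset, c ^ S.card * (upperWeight U a S * upperWeight U b' S) +
            ∑ S ∈ U.powerset, c ^ S.card * (upperWeight U a' S * upperWeight U b S) +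
            (1 + c) * ∑ S ∈ U.powerset, c ^ S.card * (upperWeight U a' S * upperWeight U b' S) := by
          gcongr <;> exact ih _ _
      _ = ∑ S ∈ (insert i U).powerset,
            c ^ S.card * (upperWeight (insert i U) a S * upperWeight (insert i U) b S) := by
          rw [sum_powerset_insert hi, mul_sum, ← sum_add_distrib, ← sum_add_distrib,
            ← sum_add_distrib, ← sum_add_distrib]
          refine sum_congr rfl fun S hS => ?_
          have hSU := mem_powerset.1 hS
          rw [upperWeight_insert_of_subset hi hSU, upperWeight_insert_of_subset hi hSU,
            upperWeight_insert_insert hi hSU, upperWeight_insert_insert hi hSU,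
            card_insert_of_notMem (notMem_mono hSU hi)]
          simp only [← ha', ← hb']
          ring

theorem Ep_noise_half_pow_four_le (hp : p ∈ Set.Ioo (0 : ℝ) 1) (f : (Fin n → Bool) → ℝ) :
    Ep p (fun x => noise p (1 / 2) f x ^ 4) ≤
      ∑ S, (p * (1 - p)) ^ S.card * genInf p S f ^ 2 := by
  have hσ := (variance_pos hp).ne'
  have poly_eq (x : Fin n → Bool) :
      halfNoisePoly p univ (coeff p f) x = noise p (1 / 2) f x := by
    rw [halfNoisePoly, powerset_univ, noise]
  have weight_eq (S : Finset (Fin n)) :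
      upperWeight univ (coeff p f) S = (p * (1 - p)) ^ S.card * genInf p S f := by
    rw [upperWeight, powerset_univ, genInf, mul_div_cancel₀ _ (pow_ne_zero _ hσ)]
  have h := Ep_halfNoisePoly_sq_mul_sq_le hp univ (coeff p f) (coeff p f)
  simp only [poly_eq, weight_eq, powerset_univ, ← pow_add] at h
  refine h.trans_eq (sum_congr rfl fun S _ => ?_)
  rw [inv_pow]
  field_simp

lemma genInf_noise_two_sq_le (hp : p ∈ Set.Ioo (0 : ℝ) 1) {d : ℕ} {η : ℝ}
    {f : (Fin n → Bool) → ℝ} (hdeg : ∀ T, d < T.card → coeff p f T = 0) {S : Finset (Fin n)}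
    (hη : genInf p S f ≤ η) :
    genInf p S (noise p 2 f) ^ 2 ≤ 16 ^ d * η * genInf p S f := by
  have influence_nonneg := genInf_nonneg (Set.Ioo_subset_Icc_self hp) S
  calc genInf p S (noise p 2 f) ^ 2
      ≤ (2 ^ (2 * d) * genInf p S f) ^ 2 := by
        gcongr
        · exact influence_nonneg _
        · exact genInf_noise_le hp one_le_two hdeg S
    _ = 16 ^ d * (genInf p S f * genInf p S f) := by
        rw [mul_pow, ← pow_mul, mul_right_comm, pow_mul]
        norm_num [sq]
    _ ≤ 16 ^ d * η * genInf p S f := by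
        rw [mul_assoc]
        gcongr
        exact influence_nonneg f

theorem Ep_pow_four_le_of_genInf_le (hp : p ∈ Set.Ioo (0 : ℝ) 1) {d : ℕ} {η : ℝ}
    {f : (Fin n → Bool) → ℝ} (hdeg : ∀ S, d < S.card → coeff p f S = 0)
    (hη : ∀ S, genInf p S f ≤ η) :
    Ep p (fun x => f x ^ 4) ≤ 32 ^ d * η * Ep p (fun x => f x ^ 2) := by
  have hσ := variance_pos hp
  have η_nonneg : 0 ≤ η := (genInf_nonneg (Set.Ioo_subset_Icc_self hp) ∅ f).trans (hη ∅)
  have half_noise_two : noise p (1 / 2) (noise p 2 f) = f := by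
    rw [noise_noise hp, one_div_mul_cancel two_ne_zero, noise_one hp]
  calc Ep p (fun x => f x ^ 4)
      ≤ ∑ S, (p * (1 - p)) ^ S.card * genInf p S (noise p 2 f) ^ 2 := by
        simpa only [half_noise_two] using Ep_noise_half_pow_four_le hp (noise p 2 f)
    _ ≤ ∑ S, (p * (1 - p)) ^ S.card * (16 ^ d * η * genInf p S f) := by
        gcongr with S
        exact genInf_noise_two_sq_le hp hdeg (hη S)
    _ = 16 ^ d * η * ∑ T, 2 ^ T.card * coeff p f T ^ 2 := by
        simp only [mul_left_comm _ (16 ^ d * η), ← mul_sum, sum_genInf hp]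
    _ ≤ 16 ^ d * η * ∑ T, 2 ^ d * coeff p f T ^ 2 := by
        gcongr 16 ^ d * η * ∑ T, ?_ with T
        rcases le_or_gt T.card d with hT | hT
        · gcongr
          exact one_le_two
        · simp [hdeg T hT]
    _ = 32 ^ d * η * Ep p (fun x => f x ^ 2) := by
        rw [← mul_sum, Ep_sq_eq_sum_coeff_sq hp, show (32 : ℝ) = 16 * 2 by norm_num, mul_pow]
        ring

end Hypercontractivity

section LowDegreeWeight

variable {p δ : ℝ} {r : ℕ}

/-- The indicator that `f` changes when the `i`-th bit is flipped, whose expectation is the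
influence of coordinate `i`. -/
noncomputable def flipIndicator (i : Fin n) (f : (Fin n → Bool) → ℝ) (x : Fin n → Bool) : ℝ :=
  if f (Function.update x i (!x i)) = f x then 0 else 1

lemma flipIndicator_mem_Icc (i : Fin n) (f : (Fin n → Bool) → ℝ) (x : Fin n → Bool) :
    flipIndicator i f x ∈ Set.Icc (0 : ℝ) 1 := by
  rw [flipIndicator]
  split_ifs <;> simp

lemma abs_derivS_singleton_le (hp : p ∈ Set.Ioo (0 : ℝ) 1) {i : Fin n}
    {f : (Fin n → Bool) → ℝ} {x : Fin n → Bool}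
    (hf : |f (Function.update x i true) - f (Function.update x i false)| ≤ 1) :
    |derivS p {i} f x| ≤ Real.sqrt (p * (1 - p)) * flipIndicator i f x := by
  rw [derivS_singleton hp, abs_mul, abs_of_nonneg (Real.sqrt_nonneg _)]
  gcongr
  rw [flipIndicator]
  split_ifs with hflip
  · have update_self := Function.update_eq_self i x
    cases hi : x i <;> rw [hi] at hflip update_self <;> rw [update_self] <;> simp_all
  · exact hf

lemma Ep_abs_derivS_mul_abs_pow_four_le (hp : p ∈ Set.Ioo (0 : ℝ) 1) {i : Fin n}
    {f : (Fin n → Bool) → ℝ}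
    (hf : ∀ x, |f (Function.update x i true) - f (Function.update x i false)| ≤ 1)
    (g : (Fin n → Bool) → ℝ) :
    Ep p (fun x => |derivS p {i} f x| * |g x|) ^ 4 ≤
      (p * (1 - p)) ^ 2 * (Ep p (flipIndicator i f) ^ 3 * Ep p (fun x => g x ^ 4)) := by
  have hp' := Set.Ioo_subset_Icc_self hp
  have flip_nonneg (x : Fin n → Bool) := (flipIndicator_mem_Icc i f x).1
  calc Ep p (fun x => |derivS p {i} f x| * |g x|) ^ 4
      ≤ (Real.sqrt (p * (1 - p)) * Ep p (fun x => flipIndicator i f x * |g x|)) ^ 4 := by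
        gcongr
        · exact Ep_nonneg hp' fun x => by positivity
        rw [← Ep_const_mul]
        refine Ep_mono hp' fun x => ?_
        rw [← mul_assoc]
        gcongr
        exact abs_derivS_singleton_le hp (hf x)
    _ = (p * (1 - p)) ^ 2 * Ep p (fun x => flipIndicator i f x * |g x|) ^ 4 := by
        rw [mul_pow, pow_mul (Real.sqrt _) 2 2, Real.sq_sqrt (variance_pos hp).le]
    _ ≤ (p * (1 - p)) ^ 2 *
          (Ep p (flipIndicator i f) ^ 3 * Ep p (fun x => flipIndicator i f x * |g x| ^ 4)) := by
        gcongr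
        exact Ep_mul_pow_le hp' flip_nonneg (fun x => abs_nonneg (g x)) 3
    _ ≤ (p * (1 - p)) ^ 2 * (Ep p (flipIndicator i f) ^ 3 * Ep p (fun x => g x ^ 4)) := by
        have := Ep_nonneg hp' flip_nonneg
        gcongr
        refine Ep_mono hp' fun x => ?_
        rw [Even.pow_abs (by decide)]
        exact mul_le_of_le_one_left (by positivity) (flipIndicator_mem_Icc i f x).2

lemma coeff_derivS_trunc_eq_zero (hp : p ∈ Set.Ioo (0 : ℝ) 1) {S T : Finset (Fin n)}
    (hT : r < S.card + T.card) (f : (Fin n → Bool) → ℝ) :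
    coeff p (derivS p S (trunc p r f)) T = 0 := by
  rw [coeff_derivS hp, coeff_trunc hp]
  split_ifs with hST hcard
  · rw [card_union_of_disjoint hST] at hcard
    omega
  · rfl
  · rfl

lemma Ep_derivS_trunc_sq (hp : p ∈ Set.Ioo (0 : ℝ) 1) (S : Finset (Fin n)) (r : ℕ)
    (f : (Fin n → Bool) → ℝ) :
    Ep p (fun x => derivS p S (trunc p r f) x ^ 2) =
      Ep p (fun x => derivS p S f x * derivS p S (trunc p r f) x) := by
  rw [Ep_sq_eq_sum_coeff_sq hp, Ep_mul_eq_sum_coeff hp]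
  refine sum_congr rfl fun T _ => ?_
  rw [coeff_derivS hp, coeff_derivS hp, coeff_trunc hp]
  split_ifs <;> ring

lemma Ep_derivS_trunc_sq_pow_four_le (hp : p ∈ Set.Ioo (0 : ℝ) 1) {f : (Fin n → Bool) → ℝ}
    {i : Fin n}
    (hf : ∀ x, |f (Function.update x i true) - f (Function.update x i false)| ≤ 1) (r : ℕ) :
    Ep p (fun x => derivS p {i} (trunc p r f) x ^ 2) ^ 4 ≤
      (p * (1 - p)) ^ 2 *
        (Ep p (flipIndicator i f) ^ 3 * Ep p (fun x => derivS p {i} (trunc p r f) x ^ 4)) := by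
  have hp' := Set.Ioo_subset_Icc_self hp
  refine (pow_le_pow_left₀ (Ep_nonneg hp' fun x => sq_nonneg _) ?_ 4).trans
    (Ep_abs_derivS_mul_abs_pow_four_le hp hf (derivS p {i} (trunc p r f)))
  refine (Ep_derivS_trunc_sq hp {i} r f).trans_le (Ep_mono hp' fun x => ?_)
  rw [← abs_mul]
  exact le_abs_self _

lemma genInf_derivS_singleton_trunc_le (hp : p ∈ Set.Ioo (0 : ℝ) 1) (hδ : 0 ≤ δ)
    {f : (Fin n → Bool) → ℝ}
    (hinf : ∀ S : Finset (Fin n), S.Nonempty → S.card ≤ r → genInf p S (trunc p r f) ≤ δ)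
    (i : Fin n) (T : Finset (Fin n)) :
    genInf p T (derivS p {i} (trunc p r f)) ≤ p * (1 - p) * δ := by
  have hσ := variance_pos hp
  by_cases hi : Disjoint {i} T
  · rw [genInf_derivS hp hi, card_singleton, pow_one]
    gcongr
    rcases le_or_gt ({i} ∪ T).card r with hcard | hcard
    · exact hinf _ ((singleton_nonempty i).mono subset_union_left) hcard
    · rwa [genInf_eq_zero fun U hU => ?_]
      rw [coeff_trunc hp, if_neg (hcard.trans_le (card_le_card hU)).not_ge]
  · rw [genInf_eq_zero fun U hU => ?_]
    · positivity
    · rw [coeff_derivS hp, if_neg fun h => hi (h.mono_right hU)]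

theorem Ep_derivS_trunc_sq_le (hp : p ∈ Set.Ioo (0 : ℝ) 1) (hδ : 0 ≤ δ)
    {f : (Fin n → Bool) → ℝ} {i : Fin n}
    (hf : ∀ x, |f (Function.update x i true) - f (Function.update x i false)| ≤ 1)
    (hinf : ∀ S : Finset (Fin n), S.Nonempty → S.card ≤ r → genInf p S (trunc p r f) ≤ δ) :
    Ep p (fun x => derivS p {i} (trunc p r f) x ^ 2) ≤
      5 ^ (r - 1) * δ ^ ((1 : ℝ) / 3) * (p * (1 - p)) * Ep p (flipIndicator i f) := by
  have hp' := Set.Ioo_subset_Icc_self hp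
  have hσ := variance_pos hp
  have influence_nonneg := Ep_nonneg hp' fun x => (flipIndicator_mem_Icc i f x).1
  set g := derivS p {i} (trunc p r f)
  set A := Ep p fun x => g x ^ 2
  set B := 5 ^ (r - 1) * δ ^ ((1 : ℝ) / 3) * (p * (1 - p)) * Ep p (flipIndicator i f) with hB
  have A_nonneg : 0 ≤ A := Ep_nonneg hp' fun x => sq_nonneg (g x)
  have B_nonneg : 0 ≤ B := by positivity
  have fourth_moment_le : Ep p (fun x => g x ^ 4) ≤ 32 ^ (r - 1) * (p * (1 - p) * δ) * A :=
    Ep_pow_four_le_of_genInf_le hp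
      (fun T hT => coeff_derivS_trunc_eq_zero hp (by rw [card_singleton]; omega) f)
      (genInf_derivS_singleton_trunc_le hp hδ hinf i)
  have cube_root_pow : (δ ^ ((1 : ℝ) / 3)) ^ 3 = δ := by
    rw [← Real.rpow_mul_natCast hδ]
    norm_num
  have B_cubed :
      B ^ 3 = (5 ^ 3) ^ (r - 1) * δ * (p * (1 - p)) ^ 3 * Ep p (flipIndicator i f) ^ 3 := by
    rw [hB, mul_pow, mul_pow, mul_pow, cube_root_pow, pow_right_comm]
  have pow_four_le : A ^ 3 * A ≤ B ^ 3 * A :=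
    calc A ^ 3 * A = A ^ 4 := (pow_succ A 3).symm
      _ ≤ (p * (1 - p)) ^ 2 * (Ep p (flipIndicator i f) ^ 3 * Ep p (fun x => g x ^ 4)) :=
        Ep_derivS_trunc_sq_pow_four_le hp hf r
      _ ≤ (p * (1 - p)) ^ 2 *
            (Ep p (flipIndicator i f) ^ 3 * ((5 ^ 3) ^ (r - 1) * (p * (1 - p) * δ) * A)) := by
        gcongr
        refine fourth_moment_le.trans ?_
        gcongr
        norm_num
      _ = B ^ 3 * A := by
        rw [B_cubed]
        ring
  rcases A_nonneg.eq_or_lt with A_zero | A_pos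
  · exact A_zero.symm.trans_le B_nonneg
  · exact le_of_pow_le_pow_left₀ three_ne_zero B_nonneg (le_of_mul_le_mul_right pow_four_le A_pos)

end LowDegreeWeight

theorem statement10_general {p δ : ℝ} {r : ℕ} (hp : p ∈ Set.Ioo (0 : ℝ) 1) (hδ : 0 ≤ δ)
    {f : (Fin n → Bool) → ℝ}
    (hf : ∀ i x, |f (Function.update x i true) - f (Function.update x i false)| ≤ 1)
    (hinf : ∀ S : Finset (Fin n), S.Nonempty → S.card ≤ r → genInf p S (trunc p r f) ≤ δ) :
    pnorm p 2 (trunc p r f) ^ 2 ≤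
      Ep p f ^ 2 + 5 ^ (r - 1) * δ ^ ((1 : ℝ) / 3) * (p * (1 - p)) * totalInf p f := by
  have mean_trunc : Ep p (trunc p r f) = Ep p f := by
    rw [← coeff_empty, coeff_trunc hp, card_empty, if_pos r.zero_le, coeff_empty]
  calc pnorm p 2 (trunc p r f) ^ 2
      ≤ Ep p f ^ 2 + ∑ i, Ep p (fun x => derivS p {i} (trunc p r f) x ^ 2) := by
        rw [pnorm_two_sq (Set.Ioo_subset_Icc_self hp), ← mean_trunc]
        exact Ep_sq_le_sq_Ep_add_sum_Ep_derivS_sq hp _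
    _ ≤ Ep p f ^ 2 + ∑ i, 5 ^ (r - 1) * δ ^ ((1 : ℝ) / 3) * (p * (1 - p)) *
          Ep p (flipIndicator i f) := by
        gcongr with i
        exact Ep_derivS_trunc_sq_le hp hδ (hf i) hinf
    _ = Ep p f ^ 2 + 5 ^ (r - 1) * δ ^ ((1 : ℝ) / 3) * (p * (1 - p)) * totalInf p f := by
        rw [← mul_sum]
        rfl

/-- bounding the low-degree weight in terms of the total influence. -/
theorem statement10 {n : ℕ} (p δ : ℝ) (r : ℕ) (hp : 0 < p) (hp' : p ≤ 1/2)
    (hr : 1 ≤ r) (hδ : 0 < δ)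
    (f : (Fin n → Bool) → ℝ) (hbool : ∀ x, f x = 0 ∨ f x = 1)
    (hinf : ∀ S : Finset (Fin n), S.Nonempty → S.card ≤ r → genInf p S (trunc p r f) ≤ δ) :
    pnorm p 2 (trunc p r f) ^ 2 ≤
      Ep p f ^ 2 + (5 : ℝ) ^ (r - 1) * δ ^ ((1 : ℝ)/3) * (p * (1 - p)) * totalInf p f :=
  statement10_general ⟨hp, by linarith⟩ hδ.le
    (fun i x => by grind [hbool (Function.update x i true), hbool (Function.update x i false)]) hinf

end GlobalHC
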